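/- Let M : X → PMF(O) be a mechanism on a finite product input space X = Π_j X_j (each X_j containing an opt-out value ⊥) satisfying (ε,δ)-differential privacy, let C be a finite consequence space, f : O → C a post-processor, and u : C → ℝ a (bounded) utility function for agent j. Set r = (e^ε − 1 + δ·|C|)·(max_{c∈C} u(c) − min_{c∈C} u(c)). Then for every response a ∈ X_j with a ≠ ⊥ and every environment x₋ⱼ, Σ_{c∈C} u(c)·P(f(M(a, x₋ⱼ)) = c) + r ≥ Σ_{c∈C} u(c)·P(f(M(⊥, x₋ⱼ)) = c); i.e., compensating agent j by r suffices to induce participation. -/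

import Mathlib

open scoped ENNReal

/-- Two inputs of a product space are neighboring if they differ in exactly one coordinate. -/
def Neighboring {n : ℕ} {X : Fin n → Type*} (x x' : ∀ j, X j) : Prop :=
  ∃ j : Fin n, x j ≠ x' j ∧ ∀ i : Fin n, i ≠ j → x i = x' i

/-- `M` satisfies `(ε,δ)`-differential privacy. -/
def IsDP {n : ℕ} {X : Fin n → Type*} {O : Type*}
    (M : (∀ j, X j) → PMF O) (ε δ : ℝ) : Prop :=
  ∀ x x' : ∀ j, X j, Neighboring x x' → ∀ S : Set O,
    (M x).toOuterMeasure S ≤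
      ENNReal.ofReal (Real.exp ε) * (M x').toOuterMeasure S + ENNReal.ofReal δ

/-!
By the layer-cake formula, the integral of a function with values in `[0, D]` is the integral over
`t ∈ (0, D]` of the masses of its superlevel sets. Applying the privacy inequality to each
superlevel set, rather than to each consequence, gives `E[v] ≤ e^ε E'[v] + δ D`, where `E` and `E'`
are the expectations on two neighboring inputs; the number of consequences does not enter.
For `v = u - min u` and `D = max u - min u`, the bound `E'[v] ≤ D` makes the excess
`(e^ε - 1) E'[v] + δ D` at most `(e^ε - 1 + δ) D`, and `δ ≤ δ |C|`.
-/

open MeasureTheory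

section Measure

variable {α : Type*} [MeasurableSpace α] {μ ν : Measure α}

theorem antitone_measureReal_superlevel [IsFiniteMeasure μ] (g : α → ℝ) :
    Antitone fun t : ℝ ↦ μ.real {a | t ≤ g a} :=
  fun _ _ hst ↦ measureReal_mono fun _ ha ↦ hst.trans ha

theorem integral_le_mul_integral_add_of_measureReal_le [IsFiniteMeasure μ] [IsFiniteMeasure ν]
    {k η D : ℝ} (h : ∀ S, MeasurableSet S → μ.real S ≤ k * ν.real S + η) {g : α → ℝ}
    (hg : Measurable g) (hD : 0 ≤ D) (hgD : ∀ a, g a ∈ Set.Icc 0 D) :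
    ∫ a, g a ∂μ ≤ k * ∫ a, g a ∂ν + η * D := by
  have layercake (ρ : Measure α) [IsFiniteMeasure ρ] :
      ∫ a, g a ∂ρ = ∫ t in Set.Ioc 0 D, ρ.real {a | t ≤ g a} :=
    (Integrable.of_mem_Icc 0 D hg.aemeasurable (.of_forall hgD)).integral_eq_integral_Ioc_meas_le
      (.of_forall fun a ↦ (hgD a).1) (.of_forall fun a ↦ (hgD a).2)
  have integrable_superlevel (ρ : Measure α) [IsFiniteMeasure ρ] :
      IntegrableOn (fun t ↦ ρ.real {a | t ≤ g a}) (Set.Ioc 0 D) :=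
    (antitone_measureReal_superlevel g).intervalIntegrable.1
  calc ∫ a, g a ∂μ
      = ∫ t in Set.Ioc 0 D, μ.real {a | t ≤ g a} := layercake μ
    _ ≤ ∫ t in Set.Ioc 0 D, (k * ν.real {a | t ≤ g a} + η) :=
        integral_mono (integrable_superlevel μ)
          (((integrable_superlevel ν).const_mul k).add (integrable_const η))
          fun t ↦ h _ (measurableSet_le measurable_const hg)
    _ = k * (∫ t in Set.Ioc 0 D, ν.real {a | t ≤ g a}) + η * D := by
        rw [integral_add ((integrable_superlevel ν).const_mul k) (integrable_const η),
          integral_const_mul, setIntegral_const, Real.volume_real_Ioc_of_le hD, sub_zero,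
          smul_eq_mul, mul_comm D]
    _ = k * ∫ a, g a ∂ν + η * D := by rw [layercake ν]

theorem integral_le_integral_add_of_measureReal_le [IsProbabilityMeasure μ]
    [IsProbabilityMeasure ν] {k η m B : ℝ} (hk : 1 ≤ k)
    (h : ∀ S, MeasurableSet S → μ.real S ≤ k * ν.real S + η) {g : α → ℝ} (hg : Measurable g)
    (hgB : ∀ a, g a ∈ Set.Icc m B) :
    ∫ a, g a ∂μ ≤ ∫ a, g a ∂ν + (k - 1 + η) * (B - m) := by
  have integrable (ρ : Measure α) [IsFiniteMeasure ρ] : Integrable g ρ :=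
    .of_mem_Icc m B hg.aemeasurable (.of_forall hgB)
  have integral_sub_min (ρ : Measure α) [IsProbabilityMeasure ρ] :
      ∫ a, (g a - m) ∂ρ = ∫ a, g a ∂ρ - m := by
    rw [integral_sub (integrable ρ) (integrable_const m), integral_const, probReal_univ, one_smul]
  have integral_le_max : ∫ a, g a ∂ν ≤ B := by
    simpa using integral_mono (integrable ν) (integrable_const B) fun a ↦ (hgB a).2
  have min_le_max : m ≤ B :=
    have ⟨a⟩ := ν.nonempty_of_neZero
    (hgB a).1.trans (hgB a).2
  have shifted : ∫ a, g a ∂μ - m ≤ k * (∫ a, g a ∂ν - m) + η * (B - m) := by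
    rw [← integral_sub_min μ, ← integral_sub_min ν]
    exact integral_le_mul_integral_add_of_measureReal_le h (hg.sub_const m)
      (sub_nonneg.2 min_le_max)
      fun a ↦ ⟨sub_nonneg.2 (hgB a).1, sub_le_sub_right (hgB a).2 m⟩
  have excess : (k - 1) * (∫ a, g a ∂ν - m) ≤ (k - 1) * (B - m) :=
    mul_le_mul_of_nonneg_left (sub_le_sub_right integral_le_max m) (sub_nonneg.2 hk)
  linarith

end Measure

section DifferentialPrivacy

variable {n : ℕ} {X : Fin n → Type*} {O C : Type*} {M : (∀ j, X j) → PMF O} {ε δ : ℝ}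

theorem neighboring_update {j : Fin n} {a b : X j} (hab : a ≠ b) (x : ∀ i, X i) :
    Neighboring (Function.update x j a) (Function.update x j b) :=
  ⟨j, by simpa only [Function.update_self] using hab,
    fun i hi ↦ by simp only [Function.update_of_ne hi]⟩

theorem IsDP.map (hM : IsDP M ε δ) (f : O → C) : IsDP (fun x ↦ (M x).map f) ε δ := by
  intro x x' hx S
  simpa only [PMF.toOuterMeasure_map_apply] using hM x x' hx (f ⁻¹' S)

theorem IsDP.measureReal_le [MeasurableSpace O] (hM : IsDP M ε δ) (hδ : 0 ≤ δ)
    {x x' : ∀ j, X j} (hx : Neighboring x x') {S : Set O} (hS : MeasurableSet S) :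
    (M x).toMeasure.real S ≤ Real.exp ε * (M x').toMeasure.real S + δ := by
  have h := hM x x' hx S
  rw [← PMF.toMeasure_apply_eq_toOuterMeasure_apply _ hS,
    ← PMF.toMeasure_apply_eq_toOuterMeasure_apply _ hS] at h
  have hfin : ENNReal.ofReal (Real.exp ε) * (M x').toMeasure S ≠ ∞ :=
    ENNReal.mul_ne_top ENNReal.ofReal_ne_top (measure_ne_top _ S)
  have h' := ENNReal.toReal_mono (ENNReal.add_ne_top.2 ⟨hfin, ENNReal.ofReal_ne_top⟩) h
  rwa [ENNReal.toReal_add hfin ENNReal.ofReal_ne_top, ENNReal.toReal_mul,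
    ENNReal.toReal_ofReal (Real.exp_nonneg ε), ENNReal.toReal_ofReal hδ] at h'

theorem IsDP.integral_le_integral_add [MeasurableSpace O] (hM : IsDP M ε δ) (hε : 0 ≤ ε)
    (hδ : 0 ≤ δ) {x x' : ∀ j, X j} (hx : Neighboring x x') {u : O → ℝ} (hu : Measurable u)
    {m B : ℝ} (huB : ∀ o, u o ∈ Set.Icc m B) :
    ∫ o, u o ∂(M x).toMeasure ≤
      ∫ o, u o ∂(M x').toMeasure + (Real.exp ε - 1 + δ) * (B - m) :=
  integral_le_integral_add_of_measureReal_le (Real.one_le_exp hε)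
    (fun _ hS ↦ hM.measureReal_le hδ hx hS) hu huB

theorem IsDP.tsum_mul_toReal_le (hM : IsDP M ε δ) (hε : 0 ≤ ε) (hδ : 0 ≤ δ) {x x' : ∀ j, X j}
    (hx : Neighboring x x') {u : O → ℝ} {m B : ℝ} (huB : ∀ o, u o ∈ Set.Icc m B) :
    ∑' o, u o * (M x o).toReal ≤
      ∑' o, u o * (M x' o).toReal + (Real.exp ε - 1 + δ) * (B - m) := by
  let _ : MeasurableSpace O := ⊤
  have hu : Measurable u := measurable_from_top
  have expectation (p : PMF O) : ∫ o, u o ∂p.toMeasure = ∑' o, u o * (p o).toReal := by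
    simpa only [smul_eq_mul, mul_comm] using
      p.integral_eq_tsum u (.of_mem_Icc m B hu.aemeasurable (.of_forall huB))
  simpa only [expectation] using hM.integral_le_integral_add hε hδ hx hu huB

end DifferentialPrivacy

section UtilityRange

variable {C : Type*} [Fintype C] [Nonempty C]

theorem mem_Icc_inf'_sup' {β : Type*} [Lattice β] (u : C → β) (c : C) :
    u c ∈ Set.Icc (Finset.univ.inf' Finset.univ_nonempty u)
      (Finset.univ.sup' Finset.univ_nonempty u) :=
  ⟨Finset.inf'_le u (Finset.mem_univ c), Finset.le_sup' u (Finset.mem_univ c)⟩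

theorem add_mul_range_le_add_mul_card_mul_range (k : ℝ) {δ : ℝ} (hδ : 0 ≤ δ) (u : C → ℝ) :
    (k + δ) * (Finset.univ.sup' Finset.univ_nonempty u -
        Finset.univ.inf' Finset.univ_nonempty u) ≤
      (k + δ * (Fintype.card C : ℝ)) * (Finset.univ.sup' Finset.univ_nonempty u -
        Finset.univ.inf' Finset.univ_nonempty u) := by
  have inf_le_sup := Set.nonempty_Icc.1 ⟨_, mem_Icc_inf'_sup' u (Classical.arbitrary C)⟩
  have δ_le : δ ≤ δ * (Fintype.card C : ℝ) :=
    le_mul_of_one_le_right hδ (mod_cast Fintype.card_pos)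
  exact mul_le_mul_of_nonneg_right (add_le_add_right δ_le k) (sub_nonneg.2 inf_le_sup)

end UtilityRange

theorem stmt10_general {n : ℕ} {X : Fin n → Type*} {O C : Type*}
    {M : (∀ j, X j) → PMF O} {ε δ : ℝ} (hε : 0 ≤ ε) (hδ : 0 ≤ δ) (hM : IsDP M ε δ)
    (f : O → C) {u : C → ℝ} {m B : ℝ} (hu : ∀ c, u c ∈ Set.Icc m B)
    {j : Fin n} {a b : X j} (hab : a ≠ b) (x : ∀ i, X i) {r : ℝ}
    (hr : (Real.exp ε - 1 + δ) * (B - m) ≤ r) :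
    (∑' c, u c * (((M (Function.update x j a)).map f) c).toReal) + r ≥
      ∑' c, u c * (((M (Function.update x j b)).map f) c).toReal :=
  ((hM.map f).tsum_mul_toReal_le hε hδ (neighboring_update hab.symm x) hu).trans
    (add_le_add_right hr _)

/-- for an `(ε,δ)`-DP mechanism on a product space whose factors each
contain an opt-out value `bot j`, and a bounded utility function `u`, compensating agent
`j` by `r = (e^ε - 1 + δ|C|)(max u - min u)` suffices to induce participation: for every
non-opt-out response `a` and every environment, the expected utility of reporting `a`
plus `r` is at least the expected utility of opting out. -/
theorem stmt10 {n : ℕ} {X : Fin n → Type*} [∀ j, Fintype (X j)] {O : Type*}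
    {C : Type*} [Fintype C] [Nonempty C]
    (bot : ∀ j, X j)
    (M : (∀ j, X j) → PMF O) (ε δ : ℝ) (hε : 0 ≤ ε) (hδ0 : 0 ≤ δ) (hδ1 : δ ≤ 1)
    (hM : IsDP M ε δ) (f : O → C) (u : C → ℝ) (j : Fin n) (r : ℝ)
    (hr : r = (Real.exp ε - 1 + δ * (Fintype.card C : ℝ)) *
      (Finset.univ.sup' Finset.univ_nonempty u - Finset.univ.inf' Finset.univ_nonempty u)) :
    ∀ a : X j, a ≠ bot j → ∀ x : ∀ i, X i,
      (∑ c : C, u c * (((M (Function.update x j a)).map f) c).toReal) + r ≥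
        ∑ c : C, u c * (((M (Function.update x j (bot j))).map f) c).toReal := by
  intro a ha x
  simpa only [tsum_fintype] using stmt10_general hε hδ0 hM f (mem_Icc_inf'_sup' u) ha x
    (hr ▸ add_mul_range_le_add_mul_card_mul_range _ hδ0 u)
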